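/- Let d ≥ 1 and let σ be a sign pattern of length d+1 whose Descartes pair is (d, 0) (resp. (0, d)), and let ((pos_0, neg_0), (pos_1, neg_1), ..., (pos_{d−1}, neg_{d−1})) be the unique SAP for σ with pos_0 + neg_0 = d, so that (pos_0, neg_0) = (d, 0) (resp. (0, d)). Then for every ν ∈ {1, ..., ⌊d/2⌋}, every SAP for σ of the form ((d−2ν, 0), (pos_1, neg_1), ..., (pos_{d−1}, neg_{d−1})) (resp. ((0, d−2ν), (pos_1, neg_1), ..., (pos_{d−1}, neg_{d−1}))) is realizable with the sign pattern σ. -/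

import Mathlib

open Polynomial

/-- Number of sign changes among consecutive entries `s 0, …, s n`. -/
def signChanges (s : ℕ → ℤ) (n : ℕ) : ℕ :=
  ((Finset.range n).filter (fun i => s i * s (i + 1) < 0)).card

/-- Number of sign preservations among consecutive entries `s 0, …, s n`. -/
def signPres (s : ℕ → ℤ) (n : ℕ) : ℕ :=
  ((Finset.range n).filter (fun i => 0 < s i * s (i + 1))).card

/-- `s` encodes a sign pattern of length `d+1` (entries `s 0, …, s d`, each `±1`,
first entry `+1`). -/
def IsSignPattern (d : ℕ) (s : ℕ → ℤ) : Prop :=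
  s 0 = 1 ∧ ∀ i ≤ d, s i = 1 ∨ s i = -1

/-- `pn k = (pos_k, neg_k)`, `k = 0, …, d-1`, is a sequence of admissible pairs (SAP)
for the sign pattern `s` of length `d+1`: each pair is admissible for the truncated
pattern `σ_k` (of length `d+1-k`, with sign changes `signChanges s (d-k)` and sign
preservations `signPres s (d-k)`), the last entry of `σ_k` is `(-1)^{pos_k}`, and the
Rolle-type inequalities and parity condition hold between consecutive pairs. -/
def IsSAP (d : ℕ) (s : ℕ → ℤ) (pn : ℕ → ℕ × ℕ) : Prop :=
  (∀ k < d,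
    (pn k).1 ≤ signChanges s (d - k) ∧
    Even ((signChanges s (d - k) : ℤ) - (pn k).1) ∧
    (pn k).2 ≤ signPres s (d - k) ∧
    Even ((signPres s (d - k) : ℤ) - (pn k).2) ∧
    s (d - k) = (-1) ^ (pn k).1) ∧
  (∀ k, k + 1 < d →
    (pn k).1 ≤ (pn (k + 1)).1 + 1 ∧
    (pn k).2 ≤ (pn (k + 1)).2 + 1 ∧
    (pn k).1 + (pn k).2 ≤ (pn (k + 1)).1 + (pn (k + 1)).2 + 1 ∧
    Even (((pn (k + 1)).1 : ℤ) + (pn (k + 1)).2 + 3 - (pn k).1 - (pn k).2))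

/-- The `k`-th derivative of a real polynomial. -/
noncomputable def iterDeriv : ℕ → Polynomial ℝ → Polynomial ℝ
  | 0, P => P
  | k + 1, P => Polynomial.derivative (iterDeriv k P)

/-- `P` has exactly `pos` positive real roots and exactly `neg` negative real roots,
all of them simple. -/
def CountRoots (P : Polynomial ℝ) (pos neg : ℕ) : Prop :=
  {x : ℝ | 0 < x ∧ P.eval x = 0}.ncard = pos ∧
  {x : ℝ | x < 0 ∧ P.eval x = 0}.ncard = neg ∧
  ∀ x : ℝ, P.eval x = 0 → (Polynomial.derivative P).eval x ≠ 0

/-- The couple (sign pattern `s`, SAP `pn`) of degree `d` is realizable: there is a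
monic real polynomial of degree `d`, with all coefficients nonzero, whose coefficient
signs define the pattern `s` (the sign of the coefficient of `x^(d-i)` is `s i`), and
such that for `k = 0, …, d-1` the `k`-th derivative has exactly `(pn k).1` positive and
`(pn k).2` negative real roots, all simple. -/
def Realizable (d : ℕ) (s : ℕ → ℤ) (pn : ℕ → ℕ × ℕ) : Prop :=
  ∃ P : Polynomial ℝ, P.Monic ∧ P.natDegree = d ∧
    (∀ j ≤ d, P.coeff j ≠ 0) ∧
    (∀ i ≤ d, 0 < (s i : ℝ) * P.coeff (d - i)) ∧
    ∀ k < d, CountRoots (iterDeriv k P) (pn k).1 (pn k).2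

/-!
It is enough to treat the sign pattern `(+, …, +)`: the reflection `(-1) ^ d * P (-x)` exchanges
sign changes with sign preservations and positive roots with negative ones. The SAP with
`pos_0 + neg_0 = d` consists of the Descartes pairs of the truncated patterns, so we need a monic
polynomial with positive coefficients whose derivative has `d - 1` distinct real roots, and which
itself has exactly `d - 2ν` real roots, all simple. All these roots are automatically negative, and
the higher derivatives are taken care of by Rolle's theorem.

Multiplying such a polynomial by `X + r` with `r` large adds one simple root both to the polynomial
and to its derivative. Starting from `1`, after `2ν` multiplications one adds a constant making the
polynomial positive on `ℝ`, which does not affect the derivative; then `d - 2ν` further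
multiplications provide the required roots.
-/

open Filter Topology

section HasPosCoeffs

variable {R : Type*} [CommRing R] [LinearOrder R] {P : R[X]}

/-- The polynomial has no missing powers below its degree and all its coefficients are positive:
the sign pattern of such a polynomial is `(+, …, +)`. -/
def HasPosCoeffs (P : R[X]) : Prop := ∀ j ≤ P.natDegree, 0 < P.coeff j

namespace HasPosCoeffs

lemma coeff_nonneg (hP : HasPosCoeffs P) (j : ℕ) : 0 ≤ P.coeff j := by
  by_cases hj : j ≤ P.natDegree
  · exact (hP j hj).le
  · exact (coeff_eq_zero_of_natDegree_lt (not_le.mp hj)).ge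

lemma ne_zero (hP : HasPosCoeffs P) : P ≠ 0 := by
  rintro rfl
  exact (hP 0 (Nat.zero_le _)).ne rfl

variable [IsStrictOrderedRing R]

lemma eval_pos (hP : HasPosCoeffs P) {x : R} (hx : 0 ≤ x) : 0 < P.eval x := by
  rw [eval_eq_sum_range]
  refine Finset.sum_pos' (fun j _ ↦ mul_nonneg (hP.coeff_nonneg j) (pow_nonneg hx j))
    ⟨0, by simp, ?_⟩
  simpa using hP 0 (Nat.zero_le _)

lemma derivative (hP : HasPosCoeffs P) (hdeg : P.natDegree ≠ 0) :
    HasPosCoeffs (derivative P) := by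
  intro j hj
  rw [natDegree_derivative] at hj
  rw [coeff_derivative]
  have : 0 < P.coeff (j + 1) := hP _ (by lia)
  positivity

lemma X_add_C_mul (hP : HasPosCoeffs P) {r : R} (hr : 0 < r) :
    HasPosCoeffs ((X + C r) * P) := by
  intro j hj
  rw [natDegree_mul (X_add_C_ne_zero r) hP.ne_zero, natDegree_X_add_C] at hj
  rw [add_mul, coeff_add, coeff_C_mul]
  cases j with
  | zero => simpa using mul_pos hr (hP 0 (Nat.zero_le _))
  | succ j =>
    rw [coeff_X_mul]
    exact add_pos_of_pos_of_nonneg (hP j (by lia)) (mul_nonneg hr.le (hP.coeff_nonneg _))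

lemma add_C (hP : HasPosCoeffs P) {c : R} (hc : 0 ≤ c) : HasPosCoeffs (P + C c) := by
  intro j hj
  rw [natDegree_add_C] at hj
  rw [coeff_add, coeff_C]
  exact add_pos_of_pos_of_nonneg (hP j hj) (by split_ifs <;> simp [hc])

lemma one : HasPosCoeffs (1 : R[X]) := by
  intro j hj
  obtain rfl : j = 0 := by simpa using hj
  simp

end HasPosCoeffs

end HasPosCoeffs

section Alternates

variable {f : ℝ → ℝ} {n : ℕ}

/-- The function `f` takes nonzero values of alternating signs at `n` points `t 0 > t 1 > ⋯`,
the value at the largest point being positive. The points are listed in decreasing order so that a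
polynomial of degree `n` with positive leading coefficient continues the alternation at `-∞`. -/
def Alternates (f : ℝ → ℝ) (n : ℕ) : Prop :=
  ∃ t : Fin n → ℝ, StrictAnti t ∧ ∀ i : Fin n, 0 < (-1) ^ (i : ℕ) * f (t i)

namespace Alternates

lemma exists_zeros (hf : Continuous f) (h : Alternates f (n + 1)) :
    ∃ r : Fin n → ℝ, StrictAnti r ∧ ∀ i, f (r i) = 0 := by
  obtain ⟨t, ht, hsign⟩ := h
  have hzero (i : Fin n) : ∃ x ∈ Set.Ioo (t i.succ) (t i.castSucc), f x = 0 := by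
    have hright := hsign i.castSucc
    have hleft := hsign i.succ
    rw [Fin.val_castSucc] at hright
    rw [Fin.val_succ, pow_succ] at hleft
    obtain ⟨x, hx, hfx⟩ := intermediate_value_Ioo (ht i.castSucc_lt_succ).le
      (f := fun x ↦ (-1) ^ (i : ℕ) * f x) (by fun_prop) ⟨by linarith, hright⟩
    exact ⟨x, hx, by simpa using hfx⟩
  choose r hr hfr using hzero
  refine ⟨r, fun i j hij ↦ ?_, hfr⟩
  calc r j < t j.castSucc := (hr j).2
    _ ≤ t i.succ := ht.antitone (Fin.succ_le_castSucc_iff.mpr hij)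
    _ < r i := (hr i).1

lemma eventually_mul_add (h : Alternates f n) (g : ℝ → ℝ) :
    ∀ᶠ r in atTop, Alternates (fun x ↦ r * f x + g x) n := by
  obtain ⟨t, ht, hsign⟩ := h
  have hpos : ∀ᶠ r in atTop, ∀ i : Fin n, 0 < (-1) ^ (i : ℕ) * (r * f (t i) + g (t i)) := by
    refine eventually_all.mpr fun i ↦ ?_
    have hlim : Tendsto (fun r : ℝ ↦ r * ((-1) ^ (i : ℕ) * f (t i)) + (-1) ^ (i : ℕ) * g (t i))
        atTop atTop :=
      tendsto_atTop_add_const_right _ _ (tendsto_id.atTop_mul_const (hsign i))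
    filter_upwards [hlim.eventually_gt_atTop 0] with r hr
    exact hr.trans_eq (by ring)
  exact hpos.mono fun r hr ↦ ⟨t, ht, hr⟩

lemma succ (h : Alternates f n) (hf : ∀ᶠ x in atBot, 0 < (-1) ^ n * f x) :
    Alternates f (n + 1) := by
  obtain ⟨t, ht, hsign⟩ := h
  have hleft : ∀ᶠ x in atBot, ∀ i, x < t i := eventually_all.mpr fun i ↦ eventually_lt_atBot (t i)
  obtain ⟨x, hfx, hx⟩ := (hf.and hleft).exists
  refine ⟨Fin.snoc t x, fun i j hij ↦ ?_, fun i ↦ ?_⟩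
  · obtain ⟨i, rfl⟩ := i.eq_castSucc_of_ne_last (hij.trans_le j.le_last).ne
    induction j using Fin.lastCases with
    | last => simpa using hx i
    | cast j => simpa using ht (Fin.castSucc_lt_castSucc_iff.mp hij)
  · induction i using Fin.lastCases with
    | last => simpa using hfx
    | cast i => simpa using hsign i

end Alternates

end Alternates

section SignAtInfinity

variable {P : ℝ[X]}

lemma eventually_atTop_eval_pos (hlc : 0 < P.leadingCoeff) : ∀ᶠ x in atTop, 0 < P.eval x := by
  refine (isEquivalent_atTop_lead P).eventually_pos ?_
  filter_upwards [eventually_gt_atTop 0] with x hx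
  positivity

lemma eventually_atBot_neg_one_pow_mul_eval_pos (hlc : 0 < P.leadingCoeff) :
    ∀ᶠ x in atBot, 0 < (-1) ^ P.natDegree * P.eval x := by
  have hlc' : 0 < (C ((-1) ^ P.natDegree) * P.comp (-X)).leadingCoeff := by
    simpa [← mul_assoc, ← mul_pow] using hlc
  filter_upwards [tendsto_neg_atBot_atTop.eventually (eventually_atTop_eval_pos hlc')] with x hx
  simpa using hx

lemma eventually_cocompact_eval_pos (hlc : 0 < P.leadingCoeff) (heven : Even P.natDegree) :
    ∀ᶠ x in cocompact ℝ, 0 < P.eval x := by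
  rw [cocompact_eq_atBot_atTop, eventually_sup]
  exact ⟨by simpa [heven.neg_one_pow] using eventually_atBot_neg_one_pow_mul_eval_pos hlc,
    eventually_atTop_eval_pos hlc⟩

lemma exists_forall_add_pos {Y : Type*} [TopologicalSpace Y] {f : Y → ℝ}
    (hf : Continuous f) (hpos : ∀ᶠ x in cocompact Y, 0 < f x) : ∃ c, 0 ≤ c ∧ ∀ x, 0 < f x + c := by
  obtain ⟨K, hK, hKpos⟩ := mem_cocompact.mp hpos
  obtain ⟨M, hM⟩ := hK.bddBelow_image hf.continuousOn
  refine ⟨max 0 (1 - M), le_max_left _ _, fun x ↦ ?_⟩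
  by_cases hx : x ∈ K
  · linarith [hM (Set.mem_image_of_mem f hx), le_max_right 0 (1 - M)]
  · exact add_pos_of_pos_of_nonneg (hKpos hx) (le_max_left _ _)

end SignAtInfinity

section StrictlyHyperbolic

variable {P : ℝ[X]}

/-- The polynomial is strictly hyperbolic: all its complex roots are real and distinct. This is
encoded as having as many distinct real roots as its degree (so it includes all constants). -/
def IsStrictlyHyperbolic (P : ℝ[X]) : Prop := P.roots.toFinset.card = P.natDegree

lemma isStrictlyHyperbolic_of_natDegree_le (h : P.natDegree ≤ P.roots.toFinset.card) :
    IsStrictlyHyperbolic P :=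
  ((Multiset.toFinset_card_le _).trans P.card_roots').antisymm h

lemma Alternates.isStrictlyHyperbolic (h : Alternates P.eval (P.natDegree + 1)) (hP : P ≠ 0) :
    IsStrictlyHyperbolic P := by
  obtain ⟨r, hr, hroot⟩ := h.exists_zeros P.continuous
  apply isStrictlyHyperbolic_of_natDegree_le
  calc P.natDegree = (Finset.univ.image r).card := by
        rw [Finset.card_image_of_injective _ hr.injective, Finset.card_fin]
    _ ≤ P.roots.toFinset.card := Finset.card_le_card fun x hx ↦ by
        obtain ⟨i, -, rfl⟩ := Finset.mem_image.mp hx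
        simpa [hP] using hroot i

namespace IsStrictlyHyperbolic

lemma card_roots (h : IsStrictlyHyperbolic P) : P.roots.card = P.natDegree :=
  P.card_roots'.antisymm (h.symm.trans_le (Multiset.toFinset_card_le _))

lemma nodup_roots (h : IsStrictlyHyperbolic P) : P.roots.Nodup :=
  Multiset.toFinset_card_eq_card_iff_nodup.mp (h.trans h.card_roots.symm)

lemma derivative (h : IsStrictlyHyperbolic P) : IsStrictlyHyperbolic (derivative P) := by
  apply isStrictlyHyperbolic_of_natDegree_le
  rw [natDegree_derivative, ← h]
  exact Nat.sub_le_of_le_add P.card_roots_toFinset_le_derivative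

end IsStrictlyHyperbolic

end StrictlyHyperbolic

section IterDeriv

lemma iterDeriv_eq_iterate (k : ℕ) (P : ℝ[X]) : iterDeriv k P = derivative^[k] P := by
  induction k with
  | zero => rfl
  | succ k ih => rw [iterDeriv, ih, Function.iterate_succ_apply']

lemma natDegree_iterDeriv (k : ℕ) (P : ℝ[X]) :
    (iterDeriv k P).natDegree = P.natDegree - k := by
  induction k with
  | zero => rfl
  | succ k ih => rw [iterDeriv, natDegree_derivative, ih, Nat.sub_sub]

lemma HasPosCoeffs.iterDeriv {P : ℝ[X]} (hP : HasPosCoeffs P) {k : ℕ} (hk : k ≤ P.natDegree) :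
    HasPosCoeffs (iterDeriv k P) := by
  induction k with
  | zero => exact hP
  | succ k ih => exact (ih (by lia)).derivative (by rw [natDegree_iterDeriv]; lia)

lemma IsStrictlyHyperbolic.iterDeriv {P : ℝ[X]} (hP : IsStrictlyHyperbolic P) (k : ℕ) :
    IsStrictlyHyperbolic (iterDeriv k P) := by
  induction k with
  | zero => exact hP
  | succ k ih => exact ih.derivative

lemma iterDeriv_C_mul (c : ℝ) (P : ℝ[X]) (k : ℕ) : iterDeriv k (C c * P) = C c * iterDeriv k P := by
  simp only [iterDeriv_eq_iterate, iterate_derivative_C_mul]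

lemma iterDeriv_comp_neg_X (P : ℝ[X]) (k : ℕ) :
    iterDeriv k (P.comp (-X)) = C ((-1) ^ k) * (iterDeriv k P).comp (-X) := by
  induction k with
  | zero => simp [iterDeriv]
  | succ k ih => simp [iterDeriv, ih, derivative_comp, pow_succ]

end IterDeriv

section CountRoots

variable {P : ℝ[X]} {pos neg : ℕ}

lemma HasPosCoeffs.countRoots (hP : HasPosCoeffs P) (hroots : P.roots.Nodup) :
    CountRoots P 0 P.roots.card := by
  have hneg {x : ℝ} (hx : P.eval x = 0) : x < 0 := by
    by_contra! h
    exact (hP.eval_pos h).ne' hx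
  refine ⟨?_, ?_, fun x hx hx' ↦ ?_⟩
  · convert Set.ncard_empty ℝ
    ext x
    simpa using fun (h : 0 < x) hx ↦ h.not_gt (hneg hx)
  · rw [← Multiset.toFinset_card_of_nodup hroots, ← Set.ncard_coe_finset]
    congr 1
    ext x
    simpa [hP.ne_zero] using hneg
  · have hmult := (one_lt_rootMultiplicity_iff_isRoot hP.ne_zero).mpr ⟨hx, hx'⟩
    rw [← count_roots] at hmult
    exact hmult.not_ge (Multiset.nodup_iff_count_le_one.mp hroots x)

lemma CountRoots.C_mul (h : CountRoots P pos neg) {c : ℝ} (hc : c ≠ 0) :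
    CountRoots (C c * P) pos neg := by
  simpa [CountRoots, hc] using h

lemma CountRoots.comp_neg_X (h : CountRoots P pos neg) : CountRoots (P.comp (-X)) neg pos := by
  obtain ⟨hpos, hneg, hsimple⟩ := h
  have hncard (s : Set ℝ) : (-s).ncard = s.ncard := by
    rw [← Set.image_neg_eq_neg, Set.ncard_image_of_injective _ neg_injective]
  refine ⟨?_, ?_, fun x hx ↦ ?_⟩
  · rw [← hneg, ← hncard]
    congr 1
    ext x
    simp
  · rw [← hpos, ← hncard]
    congr 1
    ext x
    simp
  · simpa [derivative_comp] using hsimple (-x) (by simpa using hx)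

end CountRoots

section Construction

variable {P : ℝ[X]} {m : ℕ}

-- On bounded sets and for large `r`, the derivative of `(X + r) * P` is dominated by `r` times that
-- of `P`, so it inherits the alternation of the latter; its sign at `-∞` contributes one more point.
lemma Alternates.eventually_derivative_X_add_C_mul
    (h : Alternates (derivative P).eval P.natDegree) (hP : P.Monic) :
    ∀ᶠ r in atTop, Alternates (derivative ((X + C r) * P)).eval (P.natDegree + 1) := by
  filter_upwards [h.eventually_mul_add (derivative (X * P)).eval] with r halt
  have heval (x : ℝ) : (derivative ((X + C r) * P)).eval x =
      r * (derivative P).eval x + (derivative (X * P)).eval x := by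
    simp only [add_mul, derivative_add, derivative_C_mul, eval_add, eval_C_mul, add_comm]
  have hdeg : (derivative ((X + C r) * P)).natDegree = P.natDegree := by
    rw [natDegree_derivative, (monic_X_add_C r).natDegree_mul hP, natDegree_X_add_C,
      Nat.add_sub_cancel_left]
  have hlc : 0 < (derivative ((X + C r) * P)).leadingCoeff := by
    rw [leadingCoeff_derivative, ((monic_X_add_C r).mul hP).leadingCoeff,
      (monic_X_add_C r).natDegree_mul hP, natDegree_X_add_C]
    positivity
  have hsign := eventually_atBot_neg_one_pow_mul_eval_pos hlc
  rw [hdeg] at hsign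
  exact Alternates.succ (by simpa only [heval] using halt) hsign

/-- `P` is monic with positive coefficients, it has exactly `m` real roots, all simple, and its
derivative is strictly hyperbolic. Hyperbolicity of the derivative is recorded through alternating
values, as these survive a small perturbation. -/
structure HyperbolicDerivative (P : ℝ[X]) (m : ℕ) : Prop where
  monic : P.Monic
  posCoeffs : HasPosCoeffs P
  alternates : Alternates (derivative P).eval P.natDegree
  nodup_roots : P.roots.Nodup
  card_roots : P.roots.card = m

namespace HyperbolicDerivative

lemma one : HyperbolicDerivative 1 0 where
  monic := monic_one
  posCoeffs := HasPosCoeffs.one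
  alternates := by
    rw [natDegree_one]
    exact ⟨Fin.elim0, fun i ↦ i.elim0, fun i ↦ i.elim0⟩
  nodup_roots := by simp
  card_roots := by simp

lemma exists_succ (h : HyperbolicDerivative P m) :
    ∃ Q, Q.natDegree = P.natDegree + 1 ∧ HyperbolicDerivative Q (m + 1) := by
  have hnew : ∀ᶠ r in atTop, -r ∉ P.roots := by
    filter_upwards [tendsto_neg_atTop_atBot.eventually
      (eventually_atBot_not_isRoot P h.monic.ne_zero)] with r hr
    exact mt isRoot_of_mem_roots hr
  have halternates := h.alternates.eventually_derivative_X_add_C_mul h.monic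
  obtain ⟨r, hr, halt, hrP⟩ := ((eventually_gt_atTop 0).and (halternates.and hnew)).exists
  have hpos := h.posCoeffs.X_add_C_mul hr
  have hdeg : ((X + C r) * P).natDegree = P.natDegree + 1 := by
    rw [(monic_X_add_C r).natDegree_mul h.monic, natDegree_X_add_C, add_comm]
  have hroots : ((X + C r) * P).roots = -r ::ₘ P.roots := by
    rw [roots_mul hpos.ne_zero, roots_X_add_C, Multiset.singleton_add]
  exact ⟨(X + C r) * P, hdeg, {
    monic := (monic_X_add_C r).mul h.monic
    posCoeffs := hpos
    alternates := hdeg ▸ halt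
    nodup_roots := hroots ▸ Multiset.nodup_cons.mpr ⟨hrP, h.nodup_roots⟩
    card_roots := by rw [hroots, Multiset.card_cons, h.card_roots] }⟩

lemma exists_natDegree_add (h : HyperbolicDerivative P m) (n : ℕ) :
    ∃ Q, Q.natDegree = P.natDegree + n ∧ HyperbolicDerivative Q (m + n) := by
  induction n with
  | zero => exact ⟨P, rfl, h⟩
  | succ n ih =>
    obtain ⟨Q, hdeg, hQ⟩ := ih
    obtain ⟨R, hdegR, hR⟩ := hQ.exists_succ
    exact ⟨R, by rw [hdegR, hdeg, add_assoc], hR⟩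

lemma exists_rootless (h : HyperbolicDerivative P m) (hdeg : P.natDegree ≠ 0)
    (heven : Even P.natDegree) :
    ∃ Q, Q.natDegree = P.natDegree ∧ HyperbolicDerivative Q 0 := by
  obtain ⟨c, hc, hpos⟩ := exists_forall_add_pos P.continuous
    (eventually_cocompact_eval_pos (by simp [h.monic.leadingCoeff]) heven)
  have hroots : (P + C c).roots = 0 := Multiset.eq_zero_of_forall_notMem fun x hx ↦
    (hpos x).ne' (by simpa using isRoot_of_mem_roots hx)
  exact ⟨P + C c, natDegree_add_C, {
    monic := h.monic.add_of_left
      (degree_C_le.trans_lt (natDegree_pos_iff_degree_pos.mp hdeg.pos))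
    posCoeffs := h.posCoeffs.add_C hc
    alternates := by simpa using h.alternates
    nodup_roots := by simp [hroots]
    card_roots := by simp [hroots] }⟩

lemma isStrictlyHyperbolic_derivative (h : HyperbolicDerivative P m) (hdeg : P.natDegree ≠ 0) :
    IsStrictlyHyperbolic (derivative P) := by
  refine Alternates.isStrictlyHyperbolic ?_ (h.posCoeffs.derivative hdeg).ne_zero
  rw [natDegree_derivative, Nat.sub_add_cancel hdeg.pos]
  exact h.alternates

lemma countRoots_iterDeriv (h : HyperbolicDerivative P m) {k : ℕ} (hk : k < P.natDegree) :
    CountRoots (iterDeriv k P) 0 (if k = 0 then m else P.natDegree - k) := by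
  have hpos := h.posCoeffs.iterDeriv hk.le
  cases k with
  | zero => exact h.card_roots ▸ h.posCoeffs.countRoots h.nodup_roots
  | succ k =>
    have hhyp : IsStrictlyHyperbolic (iterDeriv (k + 1) P) := by
      rw [iterDeriv_eq_iterate, Function.iterate_succ_apply, ← iterDeriv_eq_iterate]
      exact (h.isStrictlyHyperbolic_derivative (by lia)).iterDeriv k
    simpa [hhyp.card_roots, natDegree_iterDeriv] using hpos.countRoots hhyp.nodup_roots

lemma realizable (h : HyperbolicDerivative P m) :
    Realizable P.natDegree 1 fun k ↦ (0, if k = 0 then m else P.natDegree - k) :=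
  ⟨P, h.monic, rfl, fun j hj ↦ (h.posCoeffs j hj).ne',
    fun i _ ↦ by simpa using h.posCoeffs (P.natDegree - i) (Nat.sub_le _ _),
    fun _ ↦ h.countRoots_iterDeriv⟩

end HyperbolicDerivative

end Construction

section Realizable

variable {d : ℕ} {s : ℕ → ℤ} {pn : ℕ → ℕ × ℕ}

lemma Realizable.congr (h : Realizable d s pn) {s' : ℕ → ℤ} {pn' : ℕ → ℕ × ℕ}
    (hs : ∀ i ≤ d, s' i = s i) (hpn : ∀ k < d, pn' k = pn k) : Realizable d s' pn' := by
  obtain ⟨P, hmonic, hdeg, hne, hsign, hcount⟩ := h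
  exact ⟨P, hmonic, hdeg, hne, fun i hi ↦ hs i hi ▸ hsign i hi, fun k hk ↦ hpn k hk ▸ hcount k hk⟩

lemma Realizable.reflect (h : Realizable d s pn) :
    Realizable d (fun i ↦ (-1) ^ i * s i) fun k ↦ (pn k).swap := by
  obtain ⟨P, hmonic, rfl, hne, hsign, hcount⟩ := h
  have hunit (k : ℕ) : (-1 : ℝ) ^ k ≠ 0 := pow_ne_zero k (neg_ne_zero.mpr one_ne_zero)
  have hcoeff (j : ℕ) : (C ((-1) ^ P.natDegree) * P.comp (-X)).coeff j =
      (-1) ^ (P.natDegree + j) * P.coeff j := by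
    rw [coeff_C_mul, ← neg_one_mul (X : ℝ[X]), ← C_1, ← C_neg, comp_C_mul_X_coeff, pow_add]
    ring
  refine ⟨C ((-1) ^ P.natDegree) * P.comp (-X), ?_, ?_, fun j hj ↦ ?_, fun i hi ↦ ?_,
    fun k hk ↦ ?_⟩
  · simpa using hmonic.neg_one_pow_natDegree_mul_comp_neg_X
  · rw [natDegree_C_mul (hunit _), natDegree_comp, natDegree_neg, natDegree_X, mul_one]
  · rw [hcoeff]
    exact mul_ne_zero (hunit _) (hne j hj)
  · have hparity : (-1 : ℝ) ^ i * (-1) ^ (P.natDegree + (P.natDegree - i)) = 1 := by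
      rw [← pow_add]
      exact Even.neg_one_pow ⟨P.natDegree, by lia⟩
    rw [hcoeff]
    push_cast
    refine (hsign i hi).trans_eq ?_
    linear_combination (-(s i * P.coeff (P.natDegree - i))) * hparity
  · rw [iterDeriv_C_mul, iterDeriv_comp_neg_X]
    exact ((hcount k hk).comp_neg_X.C_mul (hunit _)).C_mul (hunit _)

lemma realizable_one_of_two_mul_le {ν : ℕ} (hν : 1 ≤ ν) (hνd : 2 * ν ≤ d) :
    Realizable d 1 fun k ↦ (0, if k = 0 then d - 2 * ν else d - k) := by
  obtain ⟨H, hHdeg, hH⟩ := HyperbolicDerivative.one.exists_natDegree_add (2 * ν)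
  rw [natDegree_one, zero_add] at hHdeg
  obtain ⟨Q, hQdeg, hQ⟩ := hH.exists_rootless (by lia) (hHdeg ▸ even_two_mul ν)
  obtain ⟨P, hPdeg, hP⟩ := hQ.exists_natDegree_add (d - 2 * ν)
  have hdeg : P.natDegree = d := by lia
  simpa only [hdeg, zero_add] using hP.realizable

end Realizable

section SignPattern

variable {d n : ℕ} {s : ℕ → ℤ} {pn : ℕ → ℕ × ℕ}

lemma signChanges_eq_self_iff : signChanges s n = n ↔ ∀ i < n, s i * s (i + 1) < 0 := by
  simpa [signChanges] using Finset.card_filter_eq_iff (s := Finset.range n)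
    (p := fun i ↦ s i * s (i + 1) < 0)

lemma signPres_eq_self_iff : signPres s n = n ↔ ∀ i < n, 0 < s i * s (i + 1) := by
  simpa [signPres] using Finset.card_filter_eq_iff (s := Finset.range n)
    (p := fun i ↦ 0 < s i * s (i + 1))

lemma signChanges_add_signPres_le (s : ℕ → ℤ) (n : ℕ) : signChanges s n + signPres s n ≤ n := by
  rw [signChanges, signPres, ← Finset.card_union_of_disjoint
    (Finset.disjoint_filter.mpr fun _ _ h ↦ h.le.not_gt), ← Finset.filter_or]
  exact (Finset.card_filter_le _ _).trans (Finset.card_range n).le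

lemma IsSignPattern.eq_neg_one_pow (hs : IsSignPattern d s) (hc : signChanges s d = d) :
    ∀ i ≤ d, s i = (-1) ^ i := by
  intro i hi
  induction i with
  | zero => exact hs.1
  | succ i ih =>
    have hchange := signChanges_eq_self_iff.mp hc i hi
    rw [pow_succ, ← ih (by lia)]
    rcases hs.2 i (by lia) with h | h <;> rcases hs.2 (i + 1) hi with h' | h' <;>
      rw [h, h'] at hchange ⊢ <;> lia

lemma IsSignPattern.eq_one (hs : IsSignPattern d s) (hp : signPres s d = d) :
    ∀ i ≤ d, s i = 1 := by
  intro i hi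
  induction i with
  | zero => exact hs.1
  | succ i ih =>
    have hpres := signPres_eq_self_iff.mp hp i hi
    rw [ih (by lia), one_mul] at hpres
    exact (hs.2 _ hi).resolve_right (by lia)

namespace IsSAP

lemma sub_le_add (h : IsSAP d s pn) (hsum : (pn 0).1 + (pn 0).2 = d) {k : ℕ} (hk : k < d) :
    d - k ≤ (pn k).1 + (pn k).2 := by
  induction k with
  | zero => exact hsum.ge
  | succ k ih =>
    have := (h.2 k hk).2.2.1
    have := ih (by lia)
    lia

lemma eq_signChanges_signPres (h : IsSAP d s pn) (hsum : (pn 0).1 + (pn 0).2 = d) {k : ℕ}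
    (hk : k < d) : pn k = (signChanges s (d - k), signPres s (d - k)) := by
  obtain ⟨hpos, -, hneg, -⟩ := h.1 k hk
  have := h.sub_le_add hsum hk
  have := signChanges_add_signPres_le s (d - k)
  ext <;> lia

lemma eq_of_signChanges_eq (h : IsSAP d s pn) (hsum : (pn 0).1 + (pn 0).2 = d)
    (hc : signChanges s d = d) {k : ℕ} (hk : k < d) : pn k = (d - k, 0) := by
  have hck : signChanges s (d - k) = d - k :=
    signChanges_eq_self_iff.mpr fun i hi ↦ signChanges_eq_self_iff.mp hc i (by lia)
  have := signChanges_add_signPres_le s (d - k)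
  rw [h.eq_signChanges_signPres hsum hk]
  ext <;> lia

lemma eq_of_signPres_eq (h : IsSAP d s pn) (hsum : (pn 0).1 + (pn 0).2 = d)
    (hp : signPres s d = d) {k : ℕ} (hk : k < d) : pn k = (0, d - k) := by
  have hpk : signPres s (d - k) = d - k :=
    signPres_eq_self_iff.mpr fun i hi ↦ signPres_eq_self_iff.mp hp i (by lia)
  have := signChanges_add_signPres_le s (d - k)
  rw [h.eq_signChanges_signPres hsum hk]
  ext <;> lia

end IsSAP

end SignPattern

/-- If the Descartes pair of `σ` is `(d, 0)` (resp. `(0, d)`) and `pn` is the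
unique SAP for `σ` with `pos_0 + neg_0 = d`, then for every `ν` with `1 ≤ ν` and
`2ν ≤ d`, every SAP for `σ` obtained from `pn` by replacing its first pair with
`(d-2ν, 0)` (resp. `(0, d-2ν)`) is realizable with the sign pattern `σ`. -/
theorem stmt13 (d : ℕ) (hd : 1 ≤ d) (s : ℕ → ℤ) (hs : IsSignPattern d s)
    (pn : ℕ → ℕ × ℕ) (hpn : IsSAP d s pn) (hsum : (pn 0).1 + (pn 0).2 = d) :
    ((signChanges s d = d ∧ signPres s d = 0) →
      ∀ ν : ℕ, 1 ≤ ν → 2 * ν ≤ d →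
        ∀ pn' : ℕ → ℕ × ℕ, pn' 0 = (d - 2 * ν, 0) →
          (∀ k, 1 ≤ k → k < d → pn' k = pn k) →
          IsSAP d s pn' → Realizable d s pn') ∧
    ((signChanges s d = 0 ∧ signPres s d = d) →
      ∀ ν : ℕ, 1 ≤ ν → 2 * ν ≤ d →
        ∀ pn' : ℕ → ℕ × ℕ, pn' 0 = (0, d - 2 * ν) →
          (∀ k, 1 ≤ k → k < d → pn' k = pn k) →
          IsSAP d s pn' → Realizable d s pn') := by
  constructor
  · rintro ⟨hc, -⟩ ν hν hνd pn' h0 hk -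
    refine (realizable_one_of_two_mul_le hν hνd).reflect.congr (fun i hi ↦ ?_) fun k hkd ↦ ?_
    · simpa using hs.eq_neg_one_pow hc i hi
    · rcases k.eq_zero_or_pos with rfl | hk0
      · exact h0
      · rw [hk k hk0 hkd, hpn.eq_of_signChanges_eq hsum hc hkd, if_neg hk0.ne', Prod.swap_prod_mk]
  · rintro ⟨-, hp⟩ ν hν hνd pn' h0 hk -
    refine (realizable_one_of_two_mul_le hν hνd).congr (hs.eq_one hp) fun k hkd ↦ ?_
    rcases k.eq_zero_or_pos with rfl | hk0
    · exact h0
    · rw [hk k hk0 hkd, hpn.eq_of_signPres_eq hsum hp hkd, if_neg hk0.ne']
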